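/- Let γ : ℝ × [0,T) → ℝ² be a smooth family of closed regular plane curves satisfying the curve diffusion flow equation ∂_t γ = −κ_ss ν. Then the length L(t) = ∫₀^{2π} |∂_u γ(u,t)| du satisfies L'(t) = −∫₀^{2π} (κ_s)² |∂_u γ| du ≤ 0 for all t ∈ [0,T); in particular L is monotone nonincreasing. -/

import Mathlib

open Real MeasureTheory Filter

/-- Euclidean inner product on `ℝ × ℝ`. -/
def innerP (a b : ℝ × ℝ) : ℝ := a.1 * b.1 + a.2 * b.2

/-- Speed `|γ'|` of a plane curve in a general parametrisation. -/
noncomputable def speed (γ : ℝ → ℝ × ℝ) (u : ℝ) : ℝ :=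
  Real.sqrt ((deriv γ u).1 ^ 2 + (deriv γ u).2 ^ 2)

/-- Unit normal `ν = |γ'|⁻¹ (y', -x')`. -/
noncomputable def nuG (γ : ℝ → ℝ × ℝ) (u : ℝ) : ℝ × ℝ :=
  ((deriv γ u).2 / speed γ u, -(deriv γ u).1 / speed γ u)

/-- Arc-length derivative `∂_s = |γ'|⁻¹ ∂_u` of a scalar function. -/
noncomputable def arcD (γ : ℝ → ℝ × ℝ) (f : ℝ → ℝ) (u : ℝ) : ℝ :=
  (speed γ u)⁻¹ * deriv f u

/-- Arc-length derivative of a vector-valued function. -/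
noncomputable def arcDV (γ : ℝ → ℝ × ℝ) (F : ℝ → ℝ × ℝ) (u : ℝ) : ℝ × ℝ :=
  (speed γ u)⁻¹ • deriv F u

/-- Curvature `κ = ⟨∂_s² γ, ν⟩`. -/
noncomputable def curvG (γ : ℝ → ℝ × ℝ) (u : ℝ) : ℝ :=
  innerP (arcDV γ (arcDV γ γ) u) (nuG γ u)

/-- `κ_s`, the arc-length derivative of the curvature. -/
noncomputable def curvGS (γ : ℝ → ℝ × ℝ) (u : ℝ) : ℝ := arcD γ (curvG γ) u

/-- `κ_ss`, the second arc-length derivative of the curvature. -/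
noncomputable def curvGSS (γ : ℝ → ℝ × ℝ) (u : ℝ) : ℝ := arcD γ (curvGS γ) u

/-- Length of the closed curve `γ(·,t)` over one period `[0, 2π]`. -/
noncomputable def clen (γ : ℝ → ℝ → ℝ × ℝ) (t : ℝ) : ℝ :=
  ∫ u in (0:ℝ)..(2 * Real.pi), speed (fun u' => γ u' t) u

/-- Signed enclosed area `A(t) = (1/2) ∫₀^{2π} (x y_u − y x_u) du`. -/
noncomputable def signedArea (γ : ℝ → ℝ → ℝ × ℝ) (t : ℝ) : ℝ :=
  (1/2) * ∫ u in (0:ℝ)..(2 * Real.pi),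
    ((γ u t).1 * deriv (fun u' => (γ u' t).2) u - (γ u t).2 * deriv (fun u' => (γ u' t).1) u)

/-!
Writing `τ = γ_s` and using `⟨τ, ν⟩ = 0`, a family moving with normal velocity `V = φ ν` satisfies
`∂_t |γ_u| = ⟨τ, V_u⟩ = -⟨τ_u, V⟩ = -φ κ |γ_u|`, so that `L' = -∫ φ κ ds`. For `φ = -κ_ss` an
integration by parts along the closed curve turns this into `L' = ∫ κ κ_ss ds = -∫ κ_s² ds`.
-/

open scoped ContDiff Topology

theorem subset_closure_interior_of_convex {J : Set ℝ} (hJ : Convex ℝ J)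
    (hJ' : (interior J).Nonempty) : J ⊆ closure (interior J) :=
  subset_closure.trans (hJ.closure_interior_eq_closure_of_nonempty_interior hJ').ge

section PartialDerivatives

variable {E : Type*} [NormedAddCommGroup E] [NormedSpace ℝ E] {f : ℝ × ℝ → E} {J : Set ℝ}
  {m n : ℕ∞ω} {t : ℝ}

theorem hasDerivAt_fst_of_differentiableOn (hf : DifferentiableOn ℝ f (Set.univ ×ˢ J)) (u : ℝ)
    (ht : t ∈ J) :
    HasDerivAt (fun u' => f (u', t)) (fderivWithin ℝ f (Set.univ ×ˢ J) (u, t) (1, 0)) u := by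
  have hline : HasDerivWithinAt (fun u' : ℝ => (u', t)) ((1 : ℝ), (0 : ℝ)) Set.univ u :=
    ((hasDerivAt_id u).prodMk (hasDerivAt_const u t)).hasDerivWithinAt
  exact hasDerivWithinAt_univ.1 ((hf (u, t) ⟨trivial, ht⟩).hasFDerivWithinAt.comp_hasDerivWithinAt
    (x := u) (f := fun u' : ℝ => (u', t)) hline fun _ _ => ⟨trivial, ht⟩)

theorem hasDerivWithinAt_snd_of_differentiableOn (hf : DifferentiableOn ℝ f (Set.univ ×ˢ J))
    (u : ℝ) (ht : t ∈ J) :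
    HasDerivWithinAt (fun t' => f (u, t')) (fderivWithin ℝ f (Set.univ ×ˢ J) (u, t) (0, 1))
      J t := by
  have hline : HasDerivWithinAt (fun t' : ℝ => (u, t')) ((0 : ℝ), (1 : ℝ)) J t :=
    ((hasDerivAt_const t u).prodMk (hasDerivAt_id t)).hasDerivWithinAt
  exact (hf (u, t) ⟨trivial, ht⟩).hasFDerivWithinAt.comp_hasDerivWithinAt
    (x := t) (f := fun t' : ℝ => (u, t')) hline fun _ ht' => ⟨trivial, ht'⟩

theorem contDiff_fst_of_contDiffOn (hf : ContDiffOn ℝ n f (Set.univ ×ˢ J)) (ht : t ∈ J) :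
    ContDiff ℝ n fun u => f (u, t) :=
  hf.comp_contDiff (contDiff_id.prodMk contDiff_const) fun _ => ⟨trivial, ht⟩

theorem contDiffOn_fderivWithin_univ_prod_apply (hJ : UniqueDiffOn ℝ J)
    (hf : ContDiffOn ℝ n f (Set.univ ×ˢ J)) (hmn : m + 1 ≤ n) (w : ℝ × ℝ) :
    ContDiffOn ℝ m (fun p => fderivWithin ℝ f (Set.univ ×ˢ J) p w) (Set.univ ×ˢ J) :=
  (hf.fderivWithin (uniqueDiffOn_univ.prod hJ) hmn).clm_apply contDiffOn_const

theorem contDiffOn_deriv_fst (hJ : UniqueDiffOn ℝ J) (hf : ContDiffOn ℝ n f (Set.univ ×ˢ J))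
    (hmn : m + 1 ≤ n) :
    ContDiffOn ℝ m (fun p : ℝ × ℝ => deriv (fun u => f (u, p.2)) p.1) (Set.univ ×ˢ J) :=
  (contDiffOn_fderivWithin_univ_prod_apply hJ hf hmn (1, 0)).congr fun p hp =>
    (hasDerivAt_fst_of_differentiableOn
      (hf.differentiableOn (ENat.one_le_iff_ne_zero_withTop.1 (le_add_self.trans hmn)))
      p.1 hp.2).deriv

theorem contDiffOn_derivWithin_snd (hJ : UniqueDiffOn ℝ J)
    (hf : ContDiffOn ℝ n f (Set.univ ×ˢ J)) (hmn : m + 1 ≤ n) :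
    ContDiffOn ℝ m (fun p : ℝ × ℝ => derivWithin (fun t => f (p.1, t)) J p.2)
      (Set.univ ×ˢ J) :=
  (contDiffOn_fderivWithin_univ_prod_apply hJ hf hmn (0, 1)).congr fun p hp =>
    (hasDerivWithinAt_snd_of_differentiableOn
      (hf.differentiableOn (ENat.one_le_iff_ne_zero_withTop.1 (le_add_self.trans hmn)))
      p.1 hp.2).derivWithin (hJ p.2 hp.2)

theorem hasDerivWithinAt_deriv_comm (hJ : UniqueDiffOn ℝ J) (hJ' : J ⊆ closure (interior J))
    (hf : ContDiffOn ℝ 2 f (Set.univ ×ˢ J)) (u : ℝ) (ht : t ∈ J) :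
    HasDerivWithinAt (fun t' => deriv (fun u' => f (u', t')) u)
      (deriv (fun u' => derivWithin (fun t' => f (u', t')) J t) u) J t := by
  have hS : UniqueDiffOn ℝ (Set.univ ×ˢ J : Set (ℝ × ℝ)) := uniqueDiffOn_univ.prod hJ
  have hmem : ((u, t) : ℝ × ℝ) ∈ (Set.univ ×ˢ J : Set (ℝ × ℝ)) := ⟨trivial, ht⟩
  have hf₁ : DifferentiableOn ℝ f (Set.univ ×ˢ J) := hf.differentiableOn two_ne_zero
  have hf₂ (w : ℝ × ℝ) :
      DifferentiableOn ℝ (fun p => fderivWithin ℝ f (Set.univ ×ˢ J) p w) (Set.univ ×ˢ J) :=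
    (contDiffOn_fderivWithin_univ_prod_apply hJ hf one_add_one_eq_two.le w).differentiableOn
      one_ne_zero
  have hD : DifferentiableWithinAt ℝ (fderivWithin ℝ f (Set.univ ×ˢ J)) (Set.univ ×ˢ J) (u, t) :=
    (hf.fderivWithin hS one_add_one_eq_two.le).differentiableOn one_ne_zero _ hmem
  have happly (v w : ℝ × ℝ) :
      fderivWithin ℝ (fun p => fderivWithin ℝ f (Set.univ ×ˢ J) p w) (Set.univ ×ˢ J) (u, t) v
        = fderivWithin ℝ (fderivWithin ℝ f (Set.univ ×ˢ J)) (Set.univ ×ˢ J) (u, t) v w := by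
    rw [fderivWithin_clm_apply (hS _ hmem) hD (differentiableWithinAt_const w)]
    simp
  have hsymm : IsSymmSndFDerivWithinAt ℝ f (Set.univ ×ˢ J) (u, t) :=
    (hf (u, t) hmem).isSymmSndFDerivWithinAt (by simp) hS
      (by simpa [interior_prod_eq, closure_prod_eq] using hJ' ht) hmem
  have htime : (fun u' => derivWithin (fun t' => f (u', t')) J t)
      = fun u' => fderivWithin ℝ f (Set.univ ×ˢ J) (u', t) (0, 1) :=
    funext fun u' => (hasDerivWithinAt_snd_of_differentiableOn hf₁ u' ht).derivWithin (hJ t ht)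
  rw [htime, (hasDerivAt_fst_of_differentiableOn (hf₂ (0, 1)) u ht).deriv, happly, ← hsymm.eq,
    ← happly]
  exact (hasDerivWithinAt_snd_of_differentiableOn (hf₂ (1, 0)) u ht).congr_of_mem
    (fun t' ht' => (hasDerivAt_fst_of_differentiableOn hf₁ u ht').deriv) ht

theorem exists_ball_norm_sub_le_of_hasDerivWithinAt {X : Type*} [TopologicalSpace X]
    {K : Set X} {g g' : X × ℝ → E} (hK : IsCompact K) (hJ : Convex ℝ J)
    (hg' : ContinuousOn g' (K ×ˢ J))
    (hderiv : ∀ x ∈ K, ∀ t ∈ J, HasDerivWithinAt (fun t' => g (x, t')) (g' (x, t)) J t)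
    (ht : t ∈ J) :
    ∃ δ > 0, ∀ s ∈ Metric.ball t δ ∩ J, ∀ x ∈ K,
      ‖g (x, s) - g (x, t)‖ ≤ (‖g' (x, t)‖ + 1) * ‖s - t‖ := by
  have hswap : ContinuousOn (Function.uncurry fun s x => g' (x, s)) (J ×ˢ K) :=
    hg'.comp (by fun_prop) fun p hp => ⟨hp.2, hp.1⟩
  obtain ⟨v, hv, hvclose⟩ := hK.mem_uniformity_of_prod hswap ht
    (Metric.dist_mem_uniformity one_pos)
  obtain ⟨δ, hδ, hδv⟩ := Metric.mem_nhdsWithin_iff.1 hv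
  have hclose : ∀ s ∈ Metric.ball t δ ∩ J, ∀ x ∈ K, dist (g' (x, s)) (g' (x, t)) < 1 :=
    fun s hs => hvclose s (hδv hs)
  exact ⟨δ, hδ, fun s hs x hx => Convex.norm_image_sub_le_of_norm_hasDerivWithin_le
    (fun s' hs' => (hderiv x hx s' hs'.2).mono Set.inter_subset_right)
    (fun s' hs' => norm_le_norm_add_const_of_dist_le (hclose s' hs' x hx).le)
    ((convex_ball t δ).inter hJ) ⟨Metric.mem_ball_self hδ, ht⟩ hs⟩

theorem hasDerivWithinAt_integral_of_continuousOn {f' : ℝ × ℝ → E} {a b : ℝ} (hJ : Convex ℝ J)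
    (hf : ∀ t ∈ J, ContinuousOn (fun u => f (u, t)) (Set.uIcc a b))
    (hf' : ContinuousOn f' (Set.uIcc a b ×ˢ J))
    (hderiv : ∀ u ∈ Set.uIcc a b, ∀ t ∈ J,
      HasDerivWithinAt (fun t' => f (u, t')) (f' (u, t)) J t) (ht : t ∈ J) :
    HasDerivWithinAt (fun t' => ∫ u in a..b, f (u, t')) (∫ u in a..b, f' (u, t)) J t := by
  obtain ⟨δ, hδ, hlip⟩ :=
    exists_ball_norm_sub_le_of_hasDerivWithinAt isCompact_uIcc hJ hf' hderiv ht
  have hslope : Tendsto (fun s => ∫ u in a..b, slope (fun t' => f (u, t')) t s)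
      (𝓝[J \ {t}] t) (𝓝 (∫ u in a..b, f' (u, t))) := by
    refine intervalIntegral.tendsto_integral_filter_of_dominated_convergence
      (fun u => ‖f' (u, t)‖ + 1) ?_ ?_ ?_ ?_
    · filter_upwards [self_mem_nhdsWithin] with s hs
      exact ((((hf s hs.1).sub (hf t ht)).const_smul (s - t)⁻¹).mono
        Set.uIoc_subset_uIcc).aestronglyMeasurable measurableSet_uIoc
    · filter_upwards [self_mem_nhdsWithin, mem_nhdsWithin_of_mem_nhds (Metric.ball_mem_nhds t hδ)]
        with s hs hsδ
      refine ae_of_all _ fun u hu => ?_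
      rw [slope_def_module, norm_smul, norm_inv, inv_mul_le_iff₀ (norm_sub_pos_iff.2 hs.2)]
      exact (hlip s ⟨hsδ, hs.1⟩ u (Set.uIoc_subset_uIcc hu)).trans_eq (mul_comm _ _)
    · refine ContinuousOn.intervalIntegrable (ContinuousOn.add (ContinuousOn.norm ?_)
        continuousOn_const)
      exact hf'.comp (by fun_prop) fun u hu => ⟨hu, ht⟩
    · exact ae_of_all _ fun u hu =>
        hasDerivWithinAt_iff_tendsto_slope.1 (hderiv u (Set.uIoc_subset_uIcc hu) t ht)
  refine hasDerivWithinAt_iff_tendsto_slope.2 (hslope.congr' ?_)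
  filter_upwards [self_mem_nhdsWithin] with s hs
  simp only [slope_def_module]
  rw [intervalIntegral.integral_smul, intervalIntegral.integral_sub
    (hf s hs.1).intervalIntegrable (hf t ht).intervalIntegrable]

end PartialDerivatives

section InnerP

variable {F G : ℝ → ℝ × ℝ} {F' G' : ℝ × ℝ} {s : Set ℝ} {x : ℝ}

theorem innerP_comm (a b : ℝ × ℝ) : innerP a b = innerP b a := by
  simp only [innerP, mul_comm]

theorem innerP_smul_left (r : ℝ) (a b : ℝ × ℝ) : innerP (r • a) b = r * innerP a b := by
  simp only [innerP, Prod.smul_fst, Prod.smul_snd, smul_eq_mul]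
  ring

theorem innerP_smul_right (r : ℝ) (a b : ℝ × ℝ) : innerP a (r • b) = r * innerP a b := by
  rw [innerP_comm, innerP_smul_left, innerP_comm]

theorem innerP_self_pos {a : ℝ × ℝ} (ha : a ≠ 0) : 0 < innerP a a := by
  refine (add_nonneg (mul_self_nonneg _) (mul_self_nonneg _)).lt_of_ne' fun h => ha ?_
  exact Prod.ext_iff.2 (mul_self_add_mul_self_eq_zero.1 h)

theorem hasDerivWithinAt_innerP (hF : HasDerivWithinAt F F' s x)
    (hG : HasDerivWithinAt G G' s x) :
    HasDerivWithinAt (fun y => innerP (F y) (G y)) (innerP F' (G x) + innerP (F x) G') s x := by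
  have hfst {H : ℝ → ℝ × ℝ} {H' : ℝ × ℝ} (hH : HasDerivWithinAt H H' s x) :
      HasDerivWithinAt (fun y => (H y).1) H'.1 s x :=
    (ContinuousLinearMap.fst ℝ ℝ ℝ).hasFDerivAt.comp_hasDerivWithinAt x hH
  have hsnd {H : ℝ → ℝ × ℝ} {H' : ℝ × ℝ} (hH : HasDerivWithinAt H H' s x) :
      HasDerivWithinAt (fun y => (H y).2) H'.2 s x :=
    (ContinuousLinearMap.snd ℝ ℝ ℝ).hasFDerivAt.comp_hasDerivWithinAt x hH
  refine (((hfst hF).mul (hfst hG)).add ((hsnd hF).mul (hsnd hG))).congr_deriv ?_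
  simp only [innerP]
  ring

theorem contDiffOn_innerP {X : Type*} [NormedAddCommGroup X] [NormedSpace ℝ X]
    {A B : X → ℝ × ℝ} {S : Set X} {n : ℕ∞ω} (hA : ContDiffOn ℝ n A S)
    (hB : ContDiffOn ℝ n B S) : ContDiffOn ℝ n (fun p => innerP (A p) (B p)) S :=
  (hA.fst.mul hB.fst).add (hA.snd.mul hB.snd)

end InnerP

section Curve

variable {c : ℝ → ℝ × ℝ} {u : ℝ}

theorem speed_eq_sqrt_innerP (c : ℝ → ℝ × ℝ) (u : ℝ) :
    speed c u = √(innerP (deriv c u) (deriv c u)) := by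
  simp only [speed, innerP, sq]

theorem speed_pos (hc : deriv c u ≠ 0) : 0 < speed c u := by
  rw [speed_eq_sqrt_innerP]
  exact Real.sqrt_pos.2 (innerP_self_pos hc)

theorem speed_smul_arcDV (hc : deriv c u ≠ 0) (F : ℝ → ℝ × ℝ) :
    speed c u • arcDV c F u = deriv F u :=
  smul_inv_smul₀ (speed_pos hc).ne' _

theorem arcD_mul_speed (hc : deriv c u ≠ 0) (f : ℝ → ℝ) : arcD c f u * speed c u = deriv f u := by
  rw [arcD, mul_right_comm, inv_mul_cancel₀ (speed_pos hc).ne', one_mul]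

theorem nuG_eq_rotate_arcDV (c : ℝ → ℝ × ℝ) (u : ℝ) :
    nuG c u = ((arcDV c c u).2, -(arcDV c c u).1) := by
  simp only [nuG, arcDV, Prod.smul_fst, Prod.smul_snd, smul_eq_mul, div_eq_inv_mul, mul_neg]

theorem innerP_arcDV_nuG (c : ℝ → ℝ × ℝ) (u : ℝ) : innerP (arcDV c c u) (nuG c u) = 0 := by
  rw [nuG_eq_rotate_arcDV, innerP]
  ring

theorem innerP_deriv_arcDV_nuG (hc : deriv c u ≠ 0) :
    innerP (deriv (arcDV c c) u) (nuG c u) = speed c u * curvG c u := by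
  rw [← speed_smul_arcDV hc, innerP_smul_left, curvG]

theorem innerP_arcDV_deriv_of_eq_smul_nuG {φ : ℝ → ℝ} {V : ℝ → ℝ × ℝ} (hc : deriv c u ≠ 0)
    (hτ : DifferentiableAt ℝ (arcDV c c) u) (hV : DifferentiableAt ℝ V u)
    (hφ : ∀ u, V u = φ u • nuG c u) :
    innerP (arcDV c c u) (deriv V u) = -(φ u * curvG c u * speed c u) := by
  have horth : ∀ u, innerP (arcDV c c u) (V u) = 0 := fun u => by
    rw [hφ, innerP_smul_right, innerP_arcDV_nuG, mul_zero]
  have hprod : innerP (deriv (arcDV c c) u) (V u) + innerP (arcDV c c u) (deriv V u) = 0 := by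
    have h := hasDerivWithinAt_innerP hτ.hasDerivAt.hasDerivWithinAt
      (hV.hasDerivAt.hasDerivWithinAt (s := Set.univ))
    simp only [horth] at h
    exact (hasDerivWithinAt_univ.1 h).unique (hasDerivAt_const u 0)
  rw [hφ u, innerP_smul_right, innerP_deriv_arcDV_nuG hc] at hprod
  linear_combination hprod

end Curve

section ClosedCurve

variable {c : ℝ → ℝ × ℝ} {P : ℝ}

theorem periodic_deriv {E : Type*} [NormedAddCommGroup E] [NormedSpace ℝ E] {f : ℝ → E}
    (hf : Function.Periodic f P) : Function.Periodic (deriv f) P := fun u => by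
  rw [← deriv_comp_add_const, hf.funext]

theorem periodic_speed (hc : Function.Periodic c P) : Function.Periodic (speed c) P := fun u => by
  simp only [speed, periodic_deriv hc u]

theorem periodic_arcD (hc : Function.Periodic c P) {f : ℝ → ℝ} (hf : Function.Periodic f P) :
    Function.Periodic (arcD c f) P := fun u => by
  simp only [arcD, periodic_speed hc u, periodic_deriv hf u]

theorem periodic_arcDV (hc : Function.Periodic c P) {F : ℝ → ℝ × ℝ}
    (hF : Function.Periodic F P) : Function.Periodic (arcDV c F) P := fun u => by
  simp only [arcDV, periodic_speed hc u, periodic_deriv hF u]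

theorem periodic_curvG (hc : Function.Periodic c P) : Function.Periodic (curvG c) P := fun u => by
  have hτ := periodic_arcDV hc hc
  simp only [curvG, nuG_eq_rotate_arcDV, hτ u, periodic_arcDV hc hτ u]

theorem periodic_curvGS (hc : Function.Periodic c P) : Function.Periodic (curvGS c) P :=
  periodic_arcD hc (periodic_curvG hc)

theorem integral_mul_arcD_mul_speed_of_periodic (hc : ∀ u, deriv c u ≠ 0) {f g : ℝ → ℝ}
    (hf : ContDiff ℝ 1 f) (hg : ContDiff ℝ 1 g) (hfP : Function.Periodic f P)
    (hgP : Function.Periodic g P) :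
    ∫ u in (0 : ℝ)..P, f u * arcD c g u * speed c u
      = -∫ u in (0 : ℝ)..P, arcD c f u * g u * speed c u := by
  have hleft (u : ℝ) : f u * arcD c g u * speed c u = f u * deriv g u := by
    rw [mul_assoc, arcD_mul_speed (hc u)]
  have hright (u : ℝ) : arcD c f u * g u * speed c u = deriv f u * g u := by
    rw [mul_right_comm, arcD_mul_speed (hc u)]
  simp only [hleft, hright]
  rw [intervalIntegral.integral_mul_deriv_eq_deriv_mul
    (fun u _ => (hf.differentiable one_ne_zero u).hasDerivAt)
    (fun u _ => (hg.differentiable one_ne_zero u).hasDerivAt)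
    ((hf.continuous_deriv le_rfl).intervalIntegrable _ _)
    ((hg.continuous_deriv le_rfl).intervalIntegrable _ _), hfP.eq, hgP.eq, sub_self, zero_sub]

end ClosedCurve

/-- A `C^n` family of regular curves: `γ u t` is jointly `C^n` in the parameter `u ∈ ℝ` and the time
`t ∈ J`, and every curve `u ↦ γ u t` is an immersion. Smoothness at boundary times is one-sided. -/
structure IsRegularFamily (n : ℕ∞ω) (γ : ℝ → ℝ → ℝ × ℝ) (J : Set ℝ) : Prop where
  contDiffOn : ContDiffOn ℝ n (fun p : ℝ × ℝ => γ p.1 p.2) (Set.univ ×ˢ J)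
  deriv_ne_zero : ∀ u, ∀ t ∈ J, deriv (fun u' => γ u' t) u ≠ 0

namespace IsRegularFamily

variable {γ : ℝ → ℝ → ℝ × ℝ} {J : Set ℝ} {m n : ℕ∞ω} {t : ℝ}

theorem of_le (hγ : IsRegularFamily n γ J) (hmn : m ≤ n) : IsRegularFamily m γ J :=
  ⟨hγ.contDiffOn.of_le hmn, hγ.deriv_ne_zero⟩

theorem contDiffOn_speed (hγ : IsRegularFamily n γ J) (hJ : UniqueDiffOn ℝ J)
    (hmn : m + 1 ≤ n) :
    ContDiffOn ℝ m (fun p : ℝ × ℝ => speed (fun u' => γ u' p.2) p.1) (Set.univ ×ˢ J) := by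
  have hγu := contDiffOn_deriv_fst hJ hγ.contDiffOn hmn
  simp only [speed_eq_sqrt_innerP]
  exact (contDiffOn_innerP hγu hγu).sqrt fun p hp =>
    (innerP_self_pos (hγ.deriv_ne_zero p.1 p.2 hp.2)).ne'

theorem contDiffOn_inv_speed_smul_deriv {E : Type*} [NormedAddCommGroup E] [NormedSpace ℝ E]
    {F : ℝ × ℝ → E} (hγ : IsRegularFamily n γ J) (hJ : UniqueDiffOn ℝ J) (hmn : m + 1 ≤ n)
    (hF : ContDiffOn ℝ (m + 1) F (Set.univ ×ˢ J)) :
    ContDiffOn ℝ m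
      (fun p : ℝ × ℝ => (speed (fun u' => γ u' p.2) p.1)⁻¹ • deriv (fun u' => F (u', p.2)) p.1)
      (Set.univ ×ˢ J) :=
  ((hγ.contDiffOn_speed hJ hmn).inv fun p hp =>
    (speed_pos (hγ.deriv_ne_zero p.1 p.2 hp.2)).ne').smul (contDiffOn_deriv_fst hJ hF le_rfl)

theorem contDiffOn_arcDV_self (hγ : IsRegularFamily n γ J) (hJ : UniqueDiffOn ℝ J)
    (hmn : m + 1 ≤ n) :
    ContDiffOn ℝ m (fun p : ℝ × ℝ => arcDV (fun u' => γ u' p.2) (fun u' => γ u' p.2) p.1)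
      (Set.univ ×ˢ J) :=
  hγ.contDiffOn_inv_speed_smul_deriv hJ hmn (hγ.contDiffOn.of_le hmn)

theorem contDiffOn_nuG (hγ : IsRegularFamily n γ J) (hJ : UniqueDiffOn ℝ J) (hmn : m + 1 ≤ n) :
    ContDiffOn ℝ m (fun p : ℝ × ℝ => nuG (fun u' => γ u' p.2) p.1) (Set.univ ×ˢ J) := by
  have hτ := hγ.contDiffOn_arcDV_self hJ hmn
  simp only [nuG_eq_rotate_arcDV]
  exact hτ.snd.prodMk hτ.fst.neg

theorem contDiffOn_curvG (hγ : IsRegularFamily n γ J) (hJ : UniqueDiffOn ℝ J)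
    (hmn : m + 2 ≤ n) :
    ContDiffOn ℝ m (fun p : ℝ × ℝ => curvG (fun u' => γ u' p.2) p.1) (Set.univ ×ˢ J) := by
  rw [← one_add_one_eq_two, ← add_assoc] at hmn
  have hm1 : m + 1 ≤ n := le_self_add.trans hmn
  exact contDiffOn_innerP
    (hγ.contDiffOn_inv_speed_smul_deriv hJ hm1 (hγ.contDiffOn_arcDV_self hJ hmn))
    (hγ.contDiffOn_nuG hJ hm1)

theorem contDiffOn_curvGS (hγ : IsRegularFamily n γ J) (hJ : UniqueDiffOn ℝ J)
    (hmn : m + 3 ≤ n) :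
    ContDiffOn ℝ m (fun p : ℝ × ℝ => curvGS (fun u' => γ u' p.2) p.1) (Set.univ ×ˢ J) := by
  rw [show (3 : ℕ∞ω) = 1 + 2 by norm_num, ← add_assoc] at hmn
  exact hγ.contDiffOn_inv_speed_smul_deriv hJ (le_self_add.trans hmn)
    (hγ.contDiffOn_curvG hJ hmn)

theorem contDiffOn_curvGSS (hγ : IsRegularFamily n γ J) (hJ : UniqueDiffOn ℝ J)
    (hmn : m + 4 ≤ n) :
    ContDiffOn ℝ m (fun p : ℝ × ℝ => curvGSS (fun u' => γ u' p.2) p.1) (Set.univ ×ˢ J) := by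
  rw [show (4 : ℕ∞ω) = 1 + 3 by norm_num, ← add_assoc] at hmn
  exact hγ.contDiffOn_inv_speed_smul_deriv hJ (le_self_add.trans hmn)
    (hγ.contDiffOn_curvGS hJ hmn)

theorem hasDerivWithinAt_speed (hγ : IsRegularFamily 2 γ J) (hJ : UniqueDiffOn ℝ J)
    (hJ' : J ⊆ closure (interior J)) (u : ℝ) (ht : t ∈ J) :
    HasDerivWithinAt (fun t' => speed (fun u' => γ u' t') u)
      (innerP (arcDV (fun u' => γ u' t) (fun u' => γ u' t) u)
        (deriv (fun u' => derivWithin (γ u') J t) u)) J t := by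
  have hγut := hasDerivWithinAt_deriv_comm hJ hJ' hγ.contDiffOn u ht
  have hsq := hasDerivWithinAt_innerP hγut hγut
  simp only [speed_eq_sqrt_innerP]
  refine (hsq.sqrt (innerP_self_pos (hγ.deriv_ne_zero u t ht)).ne').congr_deriv ?_
  rw [← speed_eq_sqrt_innerP (fun u' => γ u' t), arcDV, innerP_smul_left, innerP_comm (deriv _ _),
    ← two_mul, mul_div_mul_left _ _ two_ne_zero, div_eq_inv_mul, innerP_comm]

theorem hasDerivWithinAt_clen_of_normal_velocity (hγ : IsRegularFamily 2 γ J) (hJ : Convex ℝ J)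
    (hJ' : (interior J).Nonempty) (ht : t ∈ J) {φ : ℝ → ℝ}
    (hφ : ∀ u, derivWithin (γ u) J t = φ u • nuG (fun u' => γ u' t) u) :
    HasDerivWithinAt (clen γ)
      (-∫ u in (0 : ℝ)..(2 * π),
        φ u * curvG (fun u' => γ u' t) u * speed (fun u' => γ u' t) u) J t := by
  have hJu : UniqueDiffOn ℝ J := uniqueDiffOn_convex hJ hJ'
  have hJcl : J ⊆ closure (interior J) := subset_closure_interior_of_convex hJ hJ'
  have hspeed := hγ.contDiffOn_speed (m := 1) hJu one_add_one_eq_two.le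
  have hvariation (u : ℝ) : derivWithin (fun t' => speed (fun u' => γ u' t') u) J t
      = -(φ u * curvG (fun u' => γ u' t) u * speed (fun u' => γ u' t) u) :=
    ((hγ.hasDerivWithinAt_speed hJu hJcl u ht).derivWithin (hJu t ht)).trans <|
      innerP_arcDV_deriv_of_eq_smul_nuG (hγ.deriv_ne_zero u t ht)
        ((contDiff_fst_of_contDiffOn (hγ.contDiffOn_arcDV_self hJu one_add_one_eq_two.le)
          ht).differentiable one_ne_zero u)
        ((contDiff_fst_of_contDiffOn
          (contDiffOn_derivWithin_snd hJu hγ.contDiffOn one_add_one_eq_two.le)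
          ht).differentiable one_ne_zero u) hφ
  rw [← intervalIntegral.integral_neg, ← funext hvariation]
  exact hasDerivWithinAt_integral_of_continuousOn
    (f := fun p => speed (fun u' => γ u' p.2) p.1)
    (f' := fun p => derivWithin (fun t' => speed (fun u' => γ u' t') p.1) J p.2) hJ
    (fun t ht => (contDiff_fst_of_contDiffOn hspeed ht).continuous.continuousOn)
    ((contDiffOn_derivWithin_snd hJu hspeed (zero_add 1).le).continuousOn.mono
      (Set.prod_mono_left (Set.subset_univ _)))
    (fun u _ t ht => (hγ.hasDerivWithinAt_speed hJu hJcl u ht).differentiableWithinAt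
      |>.hasDerivWithinAt) ht

theorem derivWithin_eq_of_deriv_eq_on_interior (hγ : IsRegularFamily 1 γ J) (hJ : UniqueDiffOn ℝ J)
    (hJ' : J ⊆ closure (interior J)) {V : ℝ × ℝ → ℝ × ℝ}
    (hV : ContinuousOn V (Set.univ ×ˢ J)) {u : ℝ}
    (hflow : ∀ t ∈ interior J, deriv (γ u) t = V (u, t)) (ht : t ∈ J) :
    derivWithin (γ u) J t = V (u, t) := by
  have hmaps : Set.MapsTo (fun t' : ℝ => (u, t')) J (Set.univ ×ˢ J) := fun _ h => ⟨trivial, h⟩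
  have hvelocity : ContinuousOn (derivWithin (γ u) J) J :=
    (contDiffOn_derivWithin_snd hJ hγ.contDiffOn (zero_add 1).le).continuousOn.comp
      (by fun_prop) hmaps
  have heq : Set.EqOn (derivWithin (γ u) J) (fun t' => V (u, t')) (interior J) := fun t' ht' =>
    (derivWithin_of_mem_nhds (mem_interior_iff_mem_nhds.1 ht')).trans (hflow t' ht')
  exact heq.of_subset_closure hvelocity (hV.comp (by fun_prop) hmaps) interior_subset hJ' ht

theorem hasDerivWithinAt_clen_of_curveDiffusion (hγ : IsRegularFamily 4 γ J) (hJ : Convex ℝ J)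
    (hJ' : (interior J).Nonempty) (ht : t ∈ J)
    (hper : Function.Periodic (fun u => γ u t) (2 * π))
    (hflow : ∀ u, derivWithin (γ u) J t
      = (-curvGSS (fun u' => γ u' t) u) • nuG (fun u' => γ u' t) u) :
    HasDerivWithinAt (clen γ)
      (-∫ u in (0 : ℝ)..(2 * π), curvGS (fun u' => γ u' t) u ^ 2 * speed (fun u' => γ u' t) u)
      J t := by
  have hJu : UniqueDiffOn ℝ J := uniqueDiffOn_convex hJ hJ'
  refine ((hγ.of_le (by norm_num)).hasDerivWithinAt_clen_of_normal_velocity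
    hJ hJ' ht hflow).congr_deriv ?_
  have hparts :
      ∫ u in (0 : ℝ)..(2 * π), curvG (fun u' => γ u' t) u * curvGSS (fun u' => γ u' t) u *
        speed (fun u' => γ u' t) u
      = -∫ u in (0 : ℝ)..(2 * π), curvGS (fun u' => γ u' t) u * curvGS (fun u' => γ u' t) u *
        speed (fun u' => γ u' t) u :=
    integral_mul_arcD_mul_speed_of_periodic (fun u => hγ.deriv_ne_zero u t ht)
      (contDiff_fst_of_contDiffOn (hγ.contDiffOn_curvG hJu (by norm_num)) ht)
      (contDiff_fst_of_contDiffOn (hγ.contDiffOn_curvGS hJu (by norm_num)) ht)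
      (periodic_curvG hper) (periodic_curvGS hper)
  simp only [neg_mul, intervalIntegral.integral_neg, neg_neg, sq, mul_comm (curvGSS _ _), hparts]

end IsRegularFamily

theorem curve_diffusion_length_nonincreasing_general {γ : ℝ → ℝ → ℝ × ℝ} {J : Set ℝ}
    (hJ : Convex ℝ J) (hJ' : (interior J).Nonempty) (hγ : IsRegularFamily 4 γ J)
    (hper : ∀ t ∈ J, Function.Periodic (fun u => γ u t) (2 * π))
    (hflow : ∀ u, ∀ t ∈ interior J,
      deriv (γ u) t = (-curvGSS (fun u' => γ u' t) u) • nuG (fun u' => γ u' t) u) :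
    (∀ t ∈ J,
        HasDerivWithinAt (clen γ)
          (-∫ u in (0 : ℝ)..(2 * π),
            curvGS (fun u' => γ u' t) u ^ 2 * speed (fun u' => γ u' t) u) J t ∧
        (-∫ u in (0 : ℝ)..(2 * π),
            curvGS (fun u' => γ u' t) u ^ 2 * speed (fun u' => γ u' t) u) ≤ 0) ∧
      AntitoneOn (clen γ) J := by
  have hJu : UniqueDiffOn ℝ J := uniqueDiffOn_convex hJ hJ'
  have hJcl : J ⊆ closure (interior J) := subset_closure_interior_of_convex hJ hJ'
  have hvelocity : ContinuousOn (fun p : ℝ × ℝ =>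
      (-curvGSS (fun u' => γ u' p.2) p.1) • nuG (fun u' => γ u' p.2) p.1) (Set.univ ×ˢ J) :=
    ((hγ.contDiffOn_curvGSS hJu (zero_add 4).le).neg.smul
      (hγ.contDiffOn_nuG hJu (by norm_num))).continuousOn
  have hderiv : ∀ t ∈ J, HasDerivWithinAt (clen γ) (-∫ u in (0 : ℝ)..(2 * π),
      curvGS (fun u' => γ u' t) u ^ 2 * speed (fun u' => γ u' t) u) J t := fun t ht =>
    hγ.hasDerivWithinAt_clen_of_curveDiffusion hJ hJ' ht (hper t ht) fun u =>
      (hγ.of_le (by norm_num)).derivWithin_eq_of_deriv_eq_on_interior hJu hJcl hvelocity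
        (hflow u) ht
  have hnonpos (t : ℝ) : (-∫ u in (0 : ℝ)..(2 * π),
      curvGS (fun u' => γ u' t) u ^ 2 * speed (fun u' => γ u' t) u) ≤ 0 :=
    neg_nonpos.2 <| intervalIntegral.integral_nonneg two_pi_pos.le fun u _ =>
      mul_nonneg (sq_nonneg _) (Real.sqrt_nonneg _)
  refine ⟨fun t ht => ⟨hderiv t ht, hnonpos t⟩, ?_⟩
  exact antitoneOn_of_hasDerivWithinAt_nonpos hJ (fun t ht => (hderiv t ht).continuousWithinAt)
    (fun t ht => (hderiv t (interior_subset ht)).mono interior_subset) fun t _ => hnonpos t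

/-- under the curve diffusion flow `∂_t γ = −κ_ss ν` of closed plane curves,
the length satisfies `L'(t) = −∫ κ_s² dℓ ≤ 0`; in particular `L` is monotone nonincreasing. -/
theorem curve_diffusion_length_nonincreasing
    (T : ℝ) (hT : 0 < T) (γ : ℝ → ℝ → ℝ × ℝ)
    (hsmooth : ContDiffOn ℝ (⊤ : ℕ∞) (fun p : ℝ × ℝ => γ p.1 p.2) (Set.univ ×ˢ Set.Ico 0 T))
    (hper : ∀ u : ℝ, ∀ t ∈ Set.Ico (0:ℝ) T, γ (u + 2 * Real.pi) t = γ u t)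
    (hreg : ∀ u : ℝ, ∀ t ∈ Set.Ico (0:ℝ) T, deriv (fun u' => γ u' t) u ≠ 0)
    (hflow : ∀ u : ℝ, ∀ t ∈ Set.Ico (0:ℝ) T,
      deriv (fun t' => γ u t') t
        = (- curvGSS (fun u' => γ u' t) u) • nuG (fun u' => γ u' t) u) :
    (∀ t ∈ Set.Ico (0:ℝ) T,
        HasDerivWithinAt (clen γ)
          (- ∫ u in (0:ℝ)..(2 * Real.pi),
              (curvGS (fun u' => γ u' t) u) ^ 2 * speed (fun u' => γ u' t) u)
          (Set.Ico 0 T) t ∧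
        (- ∫ u in (0:ℝ)..(2 * Real.pi),
              (curvGS (fun u' => γ u' t) u) ^ 2 * speed (fun u' => γ u' t) u) ≤ 0) ∧
      AntitoneOn (clen γ) (Set.Ico 0 T) :=
  curve_diffusion_length_nonincreasing_general (convex_Ico 0 T) (by simpa using hT)
    ⟨hsmooth.of_le (WithTop.coe_le_coe.2 (le_top : (4 : ℕ∞) ≤ ⊤)), hreg⟩ (fun t ht u => hper u t ht)
    fun u t ht => hflow u t (interior_subset ht)
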